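/- For every n ≥ 2, the string x = db(n) ++ 0^{n−1} is a prefix of S_n, every binary string w of length n occurs exactly once as a substring of x, and consequently every binary string v of length n−1 occurs at least twice as a substring of x, with v·0 and v·1 each occurring exactly once as substrings of x. -/

import Mathlib

/-- `occ w x`: the number of indices `i` with `x[i..i+|w|-1] = w`,
i.e. the number of occurrences of `w` as a substring of `x`. -/
def occ (w x : List Bool) : ℕ :=
  ((List.range (x.length + 1 - w.length)).filter
    (fun i => decide ((x.drop i).take w.length = w))).length

/-- `occB w x`: the number of occurrences of `w` as a substring of `x`
starting at a position divisible by `|w|` (aligned block occurrences). -/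
def occB (w x : List Bool) : ℕ :=
  ((List.range (x.length + 1 - w.length)).filter
    (fun i => decide (i % w.length = 0) && decide ((x.drop i).take w.length = w))).length

/-- `x` is a de Bruijn string of order `n`: it has length `2^n` and every binary
string of length `n` occurs exactly once as a substring of `x ++ x[0..n-2]`. -/
def IsDeBruijn (n : ℕ) (x : List Bool) : Prop :=
  x.length = 2 ^ n ∧ ∀ w : List Bool, w.length = n → occ w (x ++ x.take (n - 1)) = 1

open Classical in
/-- `db n` is the lexicographically least de Bruijn string of order `n`
(using the lexicographic order on `List Bool`, with `false < true`);
`[]` if none exists. -/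
noncomputable def db (n : ℕ) : List Bool :=
  if h : ∃ x : List Bool, IsDeBruijn n x ∧ ∀ y, IsDeBruijn n y → x ≤ y then h.choose else []

/-- The block `B_{n,i} = db_i(n)^t`: `t` copies of the cyclic left shift of `db n` by `i`. -/
noncomputable def Bblk (n t i : ℕ) : List Bool := (List.replicate t ((db n).rotate i)).flatten

/-- The odd part `t` of `n = 2^s * t`. -/
def oddPart (n : ℕ) : ℕ := n / 2 ^ (n.factorization 2)

/-- `Sblk n` is the string `S_n = B_{n,0} B_{n,1} ⋯ B_{n,2^s-1}` where `n = 2^s * t`, `t` odd. -/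
noncomputable def Sblk (n : ℕ) : List Bool :=
  ((List.range (2 ^ (n.factorization 2))).map (fun i => Bblk n (oddPart n) i)).flatten

/-- `Sfin m = S_1 S_2 ⋯ S_m`. -/
noncomputable def Sfin (m : ℕ) : List Bool := ((List.range m).map (fun k => Sblk (k + 1))).flatten

/-- The infinite sequence `S = S_1 S_2 S_3 ⋯`, as a function giving its `i`-th bit. -/
noncomputable def Sseq (i : ℕ) : Bool := (Sfin (i + 1)).getD i false

/-- For odd `n`, `S_n = db(n)^n`. -/
noncomputable def Sodd (n : ℕ) : List Bool := (List.replicate n (db n)).flatten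

/-!
A de Bruijn string exists by cycle joining. The rotation of words of length `n` is a permutation
that moves each word along an edge of the de Bruijn graph. Composing it with transpositions of words
that differ only in their first letter keeps this property, and merges two cycles whenever the
transposed words lie on different ones; at a maximal composite, words differing only in their first
letter share a cycle, and strong connectivity of the graph leaves a single cycle.

Every rotation of a de Bruijn string is again a de Bruijn string, and one of them starts with `0^n`.
Hence so does the least one, `db n`. Therefore `db n ++ 0^(n-1)` is `db n` followed by its own first
`n - 1` letters, in which every word of length `n` occurs once; and both `db n` and its shift by one
letter, one of which follows the first copy of `db n` in `S_n`, start with `0^(n-1)`.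
-/

open scoped Finset

section CycleJoining

open Equiv

variable {X : Type*} [Finite X]

section MulSwap

variable [DecidableEq X] {σ : Perm X} {a b : X}

theorem sameCycle_mul_swap (h : ¬ σ.SameCycle a b) : (σ * swap a b).SameCycle a b := by
  -- Walk backwards from `a` along its `σ`-cycle: the walk avoids `b`, so it only uses arrows common
  -- to both permutations until it comes back to `σ a`, which is the image of `b` under the product.
  have backward (k : ℕ) : (σ * swap a b).SameCycle a ((σ⁻¹ ^ k) a) := by
    induction k with
    | zero => exact Perm.SameCycle.refl _ _
    | succ k ih =>
      rw [pow_succ', Perm.mul_apply]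
      set y := σ⁻¹ ((σ⁻¹ ^ k) a) with hy
      have hσy : σ y = (σ⁻¹ ^ k) a := by simp [hy]
      have hyb : y ≠ b := by
        intro hyb
        apply h
        rw [← hyb, ← Perm.sameCycle_apply_right, hσy, ← Perm.sameCycle_inv,
          Perm.sameCycle_pow_right]
      obtain hya | hya := eq_or_ne y a
      · rw [hya]
      · rwa [← Perm.sameCycle_apply_right, Perm.mul_apply, swap_apply_of_ne_of_ne hya hyb, hσy]
  obtain ⟨k, hk⟩ : ∃ k : ℕ, (σ⁻¹ ^ k) a = σ a :=
    (Perm.sameCycle_inv.2 (Perm.sameCycle_apply_right.2 (.refl σ a))).exists_nat_pow_eq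
  rw [← Perm.sameCycle_apply_right, Perm.mul_apply, swap_apply_right, ← hk]
  exact backward k

theorem sameCycle_setoid_le_mul_swap (h : ¬ σ.SameCycle a b) :
    Perm.SameCycle.setoid σ ≤ Perm.SameCycle.setoid (σ * swap a b) := by
  have hab := sameCycle_mul_swap h
  have forward (x : X) : (σ * swap a b).SameCycle x (σ x) := by
    rw [show σ x = (σ * swap a b) (swap a b x) by simp, Perm.sameCycle_apply_right]
    obtain rfl | hxa := eq_or_ne x a
    · rwa [swap_apply_left]
    obtain rfl | hxb := eq_or_ne x b
    · rwa [swap_apply_right, Perm.sameCycle_comm]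
    · rw [swap_apply_of_ne_of_ne hxa hxb]
  have forward_pow (x : X) (k : ℕ) : (σ * swap a b).SameCycle x ((σ ^ k) x) := by
    induction k with
    | zero => exact Perm.SameCycle.refl _ _
    | succ k ih =>
      rw [pow_succ', Perm.mul_apply]
      exact ih.trans (forward _)
  intro x y hxy
  obtain ⟨k, rfl⟩ := Perm.SameCycle.exists_nat_pow_eq hxy
  exact forward_pow x k

end MulSwap

theorem exists_perm_fiberwise_sameCycle_mul {Y : Type*} (ρ : Perm X) (f : X → Y) :
    ∃ π : Perm X, (∀ x, f (π x) = f x) ∧ ∀ x y, f x = f y → (ρ * π).SameCycle x y := by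
  classical
  obtain ⟨π, hπ, hmax⟩ := Set.Finite.exists_maximalFor
    (fun π : Perm X => Perm.SameCycle.setoid (ρ * π)) {π | ∀ x, f (π x) = f x}
    (Set.toFinite _) ⟨1, fun _ => rfl⟩
  refine ⟨π, hπ, fun x y hxy => ?_⟩
  by_contra hcycle
  have hswap : ∀ z, f ((π * swap x y) z) = f z := fun z => by
    rw [Perm.mul_apply, hπ, apply_swap_eq_self hxy]
  have hge : Perm.SameCycle.setoid (ρ * π * swap x y) ≤ Perm.SameCycle.setoid (ρ * π) :=
    hmax hswap (sameCycle_setoid_le_mul_swap hcycle)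
  exact hcycle (hge (sameCycle_mul_swap hcycle))

end CycleJoining

section Window

variable {α : Type*}

/-- The word of length `n` read off the sequence `s` from position `k` on. Words are encoded as
functions on `Fin n` here, so that they form a finite type on which permutations act. -/
def window (s : ℕ → α) (n k : ℕ) : Fin n → α := fun i => s (k + i)

theorem init_window_succ (s : ℕ → α) (n k : ℕ) :
    Fin.init (window s (n + 1) (k + 1)) = Fin.tail (window s (n + 1) k) := by
  funext i
  simp only [Fin.init, Fin.tail, window, Fin.val_castSucc, Fin.val_succ]
  congr 1
  omega

theorem exists_window_eq_and_window_eq {n : ℕ} (v w : Fin (n + 1) → α) :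
    ∃ s : ℕ → α, window s (n + 1) 0 = v ∧ window s (n + 1) (n + 1) = w := by
  refine ⟨fun i => if i < n + 1 then v (Fin.ofNat _ i) else w (Fin.ofNat _ (i - (n + 1))), ?_, ?_⟩
  · funext i
    simp [window, i.is_le]
  · funext i
    simp [window, show ¬ n + 1 + (i : ℕ) ≤ n by omega]

theorem reflTransGen_init_eq_tail {n : ℕ} (v w : Fin (n + 1) → α) :
    Relation.ReflTransGen (fun u u' => Fin.init u' = Fin.tail u) v w := by
  obtain ⟨s, rfl, rfl⟩ := exists_window_eq_and_window_eq v w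
  have reach (k : ℕ) : Relation.ReflTransGen (fun u u' => Fin.init u' = Fin.tail u)
      (window s (n + 1) 0) (window s (n + 1) k) := by
    induction k with
    | zero => exact .refl
    | succ k ih => exact ih.tail (init_window_succ s n k)
  exact reach (n + 1)

theorem window_iterate_apply_zero {n : ℕ} {f : (Fin (n + 1) → α) → (Fin (n + 1) → α)}
    (hf : ∀ w, Fin.init (f w) = Fin.tail w) (z : Fin (n + 1) → α) (k : ℕ) :
    window (fun i => f^[i] z 0) (n + 1) k = f^[k] z := by
  funext j
  induction j using Fin.induction generalizing k with
  | zero => rfl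
  | succ j ih =>
    calc f^[k + j.succ] z 0 = f^[k + 1 + j.castSucc] z 0 := by
          rw [Fin.val_succ, Fin.val_castSucc, add_right_comm, add_assoc]
      _ = Fin.init (f (f^[k] z)) j := by rw [← f.iterate_succ_apply']; exact ih (k + 1)
      _ = f^[k] z j.succ := congrFun (hf _) j

theorem ofFn_prefix_rotate_map_range_iff {s : ℕ → α} {N n : ℕ} (hs : Function.Periodic s N)
    (hn : n ≤ N) (v : Fin n → α) (k : ℕ) :
    List.ofFn v <+: ((List.range N).map s).rotate k ↔ window s n k = v := by
  have hget (i : ℕ) : s ((i + k) % N) = s (k + i) := by rw [hs.map_mod_nat, add_comm]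
  simp only [List.prefix_iff_getElem, List.length_ofFn, List.length_rotate, List.length_map,
    List.length_range, hn, exists_true_left, List.getElem_ofFn, List.getElem_rotate,
    List.getElem_map, List.getElem_range, hget, funext_iff, Fin.forall_iff, window]
  exact forall₂_congr fun _ _ => eq_comm

theorem exists_perm_init_eq_tail_isCycleOn_univ [Finite α] (n : ℕ) :
    ∃ σ : Equiv.Perm (Fin (n + 1) → α),
      (∀ w, Fin.init (σ w) = Fin.tail w) ∧ σ.IsCycleOn Set.univ := by
  let ρ : Equiv.Perm (Fin (n + 1) → α) := (finRotate (n + 1)).symm.arrowCongr (Equiv.refl α)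
  have hρ (w) : Fin.init (ρ w) = Fin.tail w := by
    funext i
    simp [ρ, Fin.init, Fin.tail]
  obtain ⟨π, hπ, hfiber⟩ := exists_perm_fiberwise_sameCycle_mul ρ Fin.tail
  have hshift (w) : Fin.init ((ρ * π) w) = Fin.tail w := by
    rw [Equiv.Perm.mul_apply, hρ, hπ]
  refine ⟨ρ * π, hshift, Set.bijOn_univ.2 (ρ * π).bijective, fun v _ w _ => ?_⟩
  induction reflTransGen_init_eq_tail v w with
  | refl => exact Equiv.Perm.SameCycle.refl _ _
  | @tail u u' _ hu ih =>
    obtain ⟨p, rfl⟩ := (ρ * π).surjective u'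
    have hpred : Fin.tail u = Fin.tail p := by rw [← hu, hshift]
    exact (ih trivial).trans (Equiv.Perm.sameCycle_apply_right.2 (hfiber u p hpred))

theorem exists_periodic_forall_existsUnique_window [Fintype α] [Nonempty α] (n : ℕ) :
    ∃ s : ℕ → α, Function.Periodic s (Fintype.card α ^ (n + 1)) ∧
      ∀ v, ∃! k, k < Fintype.card α ^ (n + 1) ∧ window s (n + 1) k = v := by
  classical
  obtain ⟨σ, hshift, hcycle⟩ := exists_perm_init_eq_tail_isCycleOn_univ (α := α) n
  rw [← Finset.coe_univ] at hcycle
  have hcard : Fintype.card α ^ (n + 1) = #(Finset.univ : Finset (Fin (n + 1) → α)) := by simp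
  rw [hcard]
  let z : Fin (n + 1) → α := fun _ => Classical.arbitrary α
  have hz : z ∈ Finset.univ := Finset.mem_univ z
  refine ⟨fun k => σ^[k] z 0, fun k => ?_, fun v => ?_⟩
  · simp only [← Equiv.Perm.coe_pow, pow_add, Equiv.Perm.mul_apply, hcycle.pow_card_apply hz]
  · obtain ⟨k, hk, rfl⟩ := hcycle.exists_pow_eq hz (Finset.mem_univ v)
    have hwindow (l : ℕ) : window (fun i => σ^[i] z 0) (n + 1) l = (σ ^ k) z ↔
        l ≡ k [MOD #(Finset.univ : Finset (Fin (n + 1) → α))] := by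
      rw [window_iterate_apply_zero hshift, ← Equiv.Perm.coe_pow, hcycle.pow_apply_eq_pow_apply hz]
    simp only [hwindow]
    exact ⟨k, ⟨hk, rfl⟩, fun l ⟨hl, hlk⟩ => hlk.eq_of_lt_of_lt hl hk⟩

end Window

section CyclicOcc

variable {α : Type*} [DecidableEq α]

/-- The number of occurrences of `w` in `x` read cyclically, counted by their starting positions in
`x`. It is expressed through rotations of `x`, so a word longer than `x` has no occurrence. -/
def cyclicOcc (w x : List α) : ℕ := #{i ∈ Finset.range x.length | w <+: x.rotate i}

theorem cyclicOcc_rotate (w x : List α) (r : ℕ) : cyclicOcc w (x.rotate r) = cyclicOcc w x := by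
  have hperiodic : Function.Periodic (fun i => w <+: x.rotate i) x.length := fun i => by
    simp only [← List.rotate_rotate, ← List.length_rotate x i, List.rotate_length]
  calc cyclicOcc w (x.rotate r)
      = #{i ∈ Finset.Ico r (r + x.length) | w <+: x.rotate i} := by
        simp only [cyclicOcc, List.length_rotate, List.rotate_rotate, Finset.card_filter,
          Finset.sum_Ico_eq_sum_range, Nat.add_sub_cancel_left]
    _ = Nat.count (fun i => w <+: x.rotate i) x.length :=
        Nat.filter_Ico_card_eq_of_periodic _ _ _ hperiodic
    _ = cyclicOcc w x := Nat.count_eq_card_filter_range _ _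

theorem exists_length_eq_forall_cyclicOcc_eq_one [Fintype α] [Nontrivial α] (n : ℕ) :
    ∃ x : List α, x.length = Fintype.card α ^ (n + 1) ∧
      ∀ w, w.length = n + 1 → cyclicOcc w x = 1 := by
  obtain ⟨s, hs, hwindow⟩ := exists_periodic_forall_existsUnique_window (α := α) n
  have hle : n + 1 ≤ Fintype.card α ^ (n + 1) := (Nat.lt_pow_self Fintype.one_lt_card).le
  refine ⟨(List.range (Fintype.card α ^ (n + 1))).map s, by simp, fun w hw => ?_⟩
  obtain ⟨v, rfl⟩ : ∃ v : Fin (n + 1) → α, List.ofFn v = w :=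
    ⟨fun i => w[i], List.ext_getElem (by simp [hw]) fun _ _ _ => List.getElem_ofFn _⟩
  rw [cyclicOcc, Finset.card_eq_one, Finset.singleton_iff_unique_mem]
  simpa only [Finset.mem_filter, Finset.mem_range, List.length_map, List.length_range,
    ofFn_prefix_rotate_map_range_iff hs hle] using hwindow v

end CyclicOcc

section ListPrefix

variable {α : Type*}

theorem prefix_drop_append_take_iff {w x : List α} (hw : w ≠ []) (hle : w.length ≤ x.length) {i : ℕ}
    (hi : i < x.length) :
    w <+: (x ++ x.take (w.length - 1)).drop i ↔ w <+: x.rotate i := by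
  have htake :
      ((x ++ x.take (w.length - 1)).drop i).take w.length = (x.rotate i).take w.length := by
    rw [List.drop_append_of_le_length hi.le, List.rotate_eq_drop_append_take hi.le,
      List.take_append, List.take_append, List.take_take, List.take_take, List.length_drop]
    congr 2
    have := List.length_pos_iff.2 hw
    omega
  rw [List.prefix_iff_eq_take, htake, ← List.prefix_iff_eq_take]

theorem prefix_rotate_one {a : α} {w x : List α} (h : a :: w <+: x) : w <+: x.rotate 1 := by
  obtain ⟨r, rfl⟩ := h
  simp

theorem replicate_prefix_of_le [LinearOrder α] {a : α} (ha : IsBot a) {n : ℕ} {x y : List α}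
    (hx : n ≤ x.length) (hxy : x ≤ y) (hy : List.replicate n a <+: y) :
    List.replicate n a <+: x := by
  induction n generalizing x y with
  | zero => exact List.nil_prefix
  | succ n ih =>
    obtain ⟨b, x, rfl⟩ := List.exists_cons_of_length_pos (Nat.zero_lt_of_lt hx)
    obtain ⟨t, rfl⟩ := hy
    rw [List.replicate_succ, List.cons_append, ← not_lt, List.cons_lt_cons_iff, not_or] at hxy
    obtain ⟨hab, htail⟩ := hxy
    obtain rfl : a = b := (ha b).eq_of_not_lt hab
    have hxt : x ≤ List.replicate n a ++ t := not_lt.1 fun hlt => htail ⟨rfl, hlt⟩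
    exact List.cons_prefix_cons.2 ⟨rfl, ih (by simpa using hx) hxt (List.prefix_append _ _)⟩

end ListPrefix

section Occ

theorem occ_eq_card (w x : List Bool) :
    occ w x = #{i ∈ Finset.range (x.length + 1) | w <+: x.drop i} := by
  change #{i ∈ Finset.range (x.length + 1 - w.length) | (x.drop i).take w.length = w} = _
  congr 1
  ext i
  simp only [Finset.mem_filter, Finset.mem_range, List.prefix_iff_eq_take, eq_comm (a := w)]
  refine and_congr_left fun h => ?_
  have hlength : w.length ≤ x.length - i := by
    rw [← List.length_drop]
    exact (List.prefix_iff_eq_take.2 h.symm).length_le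
  omega

theorem occ_append_take {w x : List Bool} (hw : w ≠ []) (hle : w.length ≤ x.length) :
    occ w (x ++ x.take (w.length - 1)) = cyclicOcc w x := by
  rw [occ_eq_card, cyclicOcc]
  congr 1
  ext i
  simp only [Finset.mem_filter, Finset.mem_range]
  have hpos := List.length_pos_iff.2 hw
  have hlength : (x ++ x.take (w.length - 1)).length = x.length + (w.length - 1) := by
    rw [List.length_append, List.length_take, min_eq_left (by omega)]
  constructor
  · rintro ⟨-, h⟩
    have hi : i < x.length := by
      have := h.length_le
      rw [List.length_drop] at this
      omega
    exact ⟨hi, (prefix_drop_append_take_iff hw hle hi).1 h⟩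
  · rintro ⟨hi, h⟩
    exact ⟨by omega, (prefix_drop_append_take_iff hw hle hi).2 h⟩

theorem occ_append_false_add_occ_append_true_le (v x : List Bool) :
    occ (v ++ [false]) x + occ (v ++ [true]) x ≤ occ v x := by
  simp only [occ_eq_card]
  rw [← Finset.card_union_of_disjoint]
  · rw [← Finset.filter_or]
    exact Finset.card_le_card <| Finset.monotone_filter_right _ fun i _ h =>
      h.elim (List.prefix_append v _).trans (List.prefix_append v _).trans
  · rw [Finset.disjoint_filter]
    intro i _ h₀ h₁
    simpa using List.prefix_of_prefix_length_le h₀ h₁ (by simp)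

end Occ

section DeBruijn

variable {n : ℕ}

theorem isDeBruijn_iff_cyclicOcc (hn : n ≠ 0) (x : List Bool) :
    IsDeBruijn n x ↔ x.length = 2 ^ n ∧ ∀ w : List Bool, w.length = n → cyclicOcc w x = 1 := by
  refine and_congr_right fun hx => forall₂_congr fun w hw => ?_
  subst hw
  rw [occ_append_take (List.length_pos_iff.1 (Nat.pos_of_ne_zero hn))
    (hx ▸ Nat.lt_two_pow_self.le)]

theorem IsDeBruijn.rotate {x : List Bool} (hx : IsDeBruijn n x) (hn : n ≠ 0) (r : ℕ) :
    IsDeBruijn n (x.rotate r) := by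
  rw [isDeBruijn_iff_cyclicOcc hn] at hx ⊢
  simpa only [List.length_rotate, cyclicOcc_rotate] using hx

theorem exists_isDeBruijn (hn : n ≠ 0) : ∃ x, IsDeBruijn n x := by
  obtain ⟨m, rfl⟩ := Nat.exists_eq_succ_of_ne_zero hn
  simp only [isDeBruijn_iff_cyclicOcc hn]
  exact exists_length_eq_forall_cyclicOcc_eq_one m

theorem isLeast_db (hn : n ≠ 0) : IsLeast {x | IsDeBruijn n x} (db n) := by
  have hfinite : {x | IsDeBruijn n x}.Finite :=
    (List.finite_length_eq Bool (2 ^ n)).subset fun _ hx => hx.1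
  have hleast : ∃ x, IsDeBruijn n x ∧ ∀ y, IsDeBruijn n y → x ≤ y :=
    Set.exists_min_image _ id hfinite (exists_isDeBruijn hn)
  rw [db, dif_pos hleast]
  exact ⟨hleast.choose_spec.1, fun _ hy => hleast.choose_spec.2 _ hy⟩

theorem replicate_false_prefix_db (hn : n ≠ 0) : List.replicate n false <+: db n := by
  obtain ⟨hdb, hmin⟩ := isLeast_db hn
  obtain ⟨hlength, hocc⟩ := (isDeBruijn_iff_cyclicOcc hn _).1 hdb
  obtain ⟨i, hi⟩ : ∃ i, List.replicate n false <+: (db n).rotate i := by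
    have hpos : 0 < cyclicOcc (List.replicate n false) (db n) := by simp [hocc]
    obtain ⟨i, hi⟩ := Finset.card_pos.1 hpos
    exact ⟨i, (Finset.mem_filter.1 hi).2⟩
  exact replicate_prefix_of_le (fun b => Bool.false_le b) (hlength ▸ Nat.lt_two_pow_self.le)
    (hmin (hdb.rotate hn i)) hi

theorem take_sub_one_db (hn : n ≠ 0) : (db n).take (n - 1) = List.replicate (n - 1) false := by
  obtain ⟨r, hr⟩ := replicate_false_prefix_db hn
  rw [← hr, List.take_append_of_le_length (by simp), List.take_replicate,
    min_eq_left (Nat.sub_le n 1)]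

theorem occ_db_append_replicate (hn : n ≠ 0) {w : List Bool} (hw : w.length = n) :
    occ w (db n ++ List.replicate (n - 1) false) = 1 := by
  rw [← take_sub_one_db hn]
  exact (isLeast_db hn).1.2 w hw

theorem db_append_db_or_rotate_prefix_Sblk (hn : 2 ≤ n) :
    db n ++ db n <+: Sblk n ∨ db n ++ (db n).rotate 1 <+: Sblk n := by
  have hmul : 2 ^ n.factorization 2 * oddPart n = n := Nat.ordProj_mul_ordCompl_eq_self n 2
  have hblocks (k : ℕ) (hk : k ≤ 2 ^ n.factorization 2) :
      ((List.range k).map (Bblk n (oddPart n))).flatten <+: Sblk n :=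
    ((List.prefix_iff_eq_take.2 (by simp [List.take_range, hk])).map _).flatten
  have hcopies (k : ℕ) (hk : k ≤ oddPart n) :
      (List.replicate k (db n)).flatten <+: Bblk n (oddPart n) 0 := by
    simpa [Bblk] using (List.prefix_iff_eq_take.2 (by simp [hk]) :
      List.replicate k (db n) <+: List.replicate (oddPart n) (db n)).flatten
  obtain hodd | hodd : oddPart n = 1 ∨ 2 ≤ oddPart n := by
    have : oddPart n ≠ 0 := fun h => by simp only [h, mul_zero] at hmul; omega
    omega
  · right
    simpa [hodd, Bblk, List.range_succ] using
      hblocks 2 (hn.trans_eq (by simpa [hodd] using hmul.symm))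
  · left
    have := (hcopies 2 hodd).trans (by simpa using hblocks 1 Nat.one_le_two_pow)
    simpa [List.replicate_succ] using this

theorem db_append_replicate_prefix_Sblk (hn : 2 ≤ n) :
    db n ++ List.replicate (n - 1) false <+: Sblk n := by
  have hzeros : false :: List.replicate (n - 1) false <+: db n := by
    rw [← List.replicate_succ, Nat.sub_add_cancel (by omega)]
    exact replicate_false_prefix_db (by omega)
  obtain h | h := db_append_db_or_rotate_prefix_Sblk hn
  · have : List.replicate (n - 1) false <+: db n := by
      rw [← take_sub_one_db (by omega)]; exact List.take_prefix _ _
    exact ((List.prefix_append_right_inj _).2 this).trans h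
  · exact ((List.prefix_append_right_inj _).2 (prefix_rotate_one hzeros)).trans h

end DeBruijn

/-- For every `n ≥ 2`, the string `x = db(n) ++ 0^{n-1}` is a prefix of `S_n`; every string
of length `n` occurs exactly once as a substring of `x`; and every string `v` of length
`n-1` occurs at least twice in `x`, with `v·0` and `v·1` each occurring exactly once. -/
theorem stmt5 (n : ℕ) (hn : 2 ≤ n) :
    (db n ++ List.replicate (n - 1) false) <+: Sblk n ∧
    (∀ w : List Bool, w.length = n →
      occ w (db n ++ List.replicate (n - 1) false) = 1) ∧
    (∀ v : List Bool, v.length = n - 1 →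
      2 ≤ occ v (db n ++ List.replicate (n - 1) false) ∧
      occ (v ++ [false]) (db n ++ List.replicate (n - 1) false) = 1 ∧
      occ (v ++ [true]) (db n ++ List.replicate (n - 1) false) = 1) := by
  have hn₀ : n ≠ 0 := by omega
  refine ⟨db_append_replicate_prefix_Sblk hn, fun w => occ_db_append_replicate hn₀, fun v hv => ?_⟩
  have hfalse := occ_db_append_replicate hn₀ (w := v ++ [false]) (by simp; omega)
  have htrue := occ_db_append_replicate hn₀ (w := v ++ [true]) (by simp; omega)
  have hle := occ_append_false_add_occ_append_true_le v (db n ++ List.replicate (n - 1) false)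
  exact ⟨by omega, hfalse, htrue⟩
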